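/- Let p be a prime, let G = SL(2,ℚ_p), let K = SL(2,ℤ_p), and for an integer λ let a_λ ∈ G be the diagonal matrix diag(p^λ, p^(−λ)). For every integer λ ≥ 1, the set of left cosets gK of K in G that are contained in the double coset K·a_λ·K is finite, and its cardinality equals (p + 1)·p^(2λ−1). -/

import Mathlib

/-- The diagonal matrix `diag(p^λ, p^(−λ))` as an element of `SL(2, ℚ_p)`. -/
noncomputable def aSL (p : ℕ) [Fact p.Prime] (lam : ℤ) :
    Matrix.SpecialLinearGroup (Fin 2) ℚ_[p] :=
  ⟨!![(p : ℚ_[p]) ^ lam, 0; 0, (p : ℚ_[p]) ^ (-lam)], by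
    have hp : (p : ℚ_[p]) ≠ 0 := by
      exact_mod_cast (Fact.out : p.Prime).ne_zero
    simp [Matrix.det_fin_two_of, zpow_neg]
    exact mul_inv_cancel₀ (zpow_ne_zero _ hp)⟩

/-- The maximal compact subgroup `K = SL(2, ℤ_p)`, viewed as the set of elements of
`SL(2, ℚ_p)` all of whose entries lie in `ℤ_p` (i.e. have norm at most `1`). -/
def Kset (p : ℕ) [Fact p.Prime] : Set (Matrix.SpecialLinearGroup (Fin 2) ℚ_[p]) :=
  {g | ∀ i j : Fin 2, ‖(g : Matrix (Fin 2) (Fin 2) ℚ_[p]) i j‖ ≤ 1}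

/-- The set of left cosets `gK` of `K` in `G = SL(2, ℚ_p)` that are contained in the
double coset `K·a_λ·K`. -/
def cosetsIn (p : ℕ) [Fact p.Prime] (lam : ℤ) :
    Set (Set (Matrix.SpecialLinearGroup (Fin 2) ℚ_[p])) :=
  {C | (∃ g : Matrix.SpecialLinearGroup (Fin 2) ℚ_[p], C = {h | ∃ k ∈ Kset p, h = g * k}) ∧
    C ⊆ {h | ∃ k₁ ∈ Kset p, ∃ k₂ ∈ Kset p, h = k₁ * aSL p lam * k₂}}

/-! By orbit-stabilizer, the left cosets contained in `K a K` correspond to `K ⧸ (K ∩ a K a⁻¹)`.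
When `K = SL(2, R)` and `a = diag(r, r⁻¹)`, conjugation by `a` multiplies the upper right entry by
`r ^ 2` and divides the lower left one by it, so the intersection is the congruence subgroup
`Γ⁰(r ^ 2)`. A coset of `Γ⁰(I)` is determined by the second column of its matrices modulo `I`, up to
units, that is by a point of the projective line over `R ⧸ I`. If `R ⧸ I` is local, one coordinate
of each point is a unit, so the points are the `[x : 1]` and the `[1 : y]` with `y` in the maximal
ideal. For `I = P ^ (2 * n)`, with `R ⧸ P` of order `q`, there are `q ^ (2 * n)` points of the first
kind and `q ^ (2 * n - 1)` of the second. -/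

section LeftCosets

open scoped Pointwise

variable {G H : Type*} [Group G] [Group H]

/-- The left cosets of `K` contained in the double coset `K a K`, as subsets of `G`: the degree of
the Hecke operator of `K a K` is their number. -/
def leftCosetsIn (K : Subgroup G) (a : G) : Set (Set G) :=
  {C | (∃ g : G, C = g • (K : Set G)) ∧ C ⊆ DoubleCoset.doubleCoset a K K}

theorem leftCosetsIn_range (φ : H →* G) (a : G) :
    leftCosetsIn φ.range a = Set.range fun h ↦ (φ h * a) • (φ.range : Set G) := by
  ext C
  constructor
  · rintro ⟨⟨g, rfl⟩, hsub⟩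
    obtain ⟨_, ⟨h, rfl⟩, k, hk, rfl⟩ :=
      DoubleCoset.mem_doubleCoset.1 (hsub (mem_own_leftCoset φ.range.toSubmonoid g))
    refine ⟨h, (leftCoset_eq_iff φ.range).2 ?_⟩
    rwa [inv_mul_cancel_left]
  · rintro ⟨h, rfl⟩
    refine ⟨⟨_, rfl⟩, ?_⟩
    rintro _ ⟨k, hk, rfl⟩
    exact DoubleCoset.mem_doubleCoset.2 ⟨φ h, ⟨h, rfl⟩, k, hk, rfl⟩

theorem leftCoset_mul_eq_iff (K : Subgroup G) (φ : H →* G) (a : G) (h h' : H) :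
    (φ h * a) • (K : Set G) = (φ h' * a) • (K : Set G) ↔
      h⁻¹ * h' ∈ (MulAut.conj a • K).comap φ := by
  rw [leftCoset_eq_iff, Subgroup.mem_comap, Subgroup.mem_pointwise_smul_iff_inv_smul_mem]
  simp [mul_assoc]

/-- The orbit map `h ↦ φ(h) a K` identifies the left cosets of `K = φ(H)` contained in `K a K` with
`H` modulo the preimage of `a K a⁻¹`. -/
noncomputable def quotientComapConjEquivLeftCosetsIn (φ : H →* G) (a : G) :
    H ⧸ (MulAut.conj a • φ.range).comap φ ≃ leftCosetsIn φ.range a :=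
  (Quotient.congrRight fun h h' ↦ QuotientGroup.leftRel_apply.trans
    (leftCoset_mul_eq_iff φ.range φ a h h').symm).trans <|
  (Setoid.quotientKerEquivRange _).trans (Equiv.setCongr (leftCosetsIn_range φ a).symm)

end LeftCosets

section CongruenceSubgroup

open Matrix Matrix.SpecialLinearGroup IsLocalRing
open scoped MatrixGroups Pointwise

variable {R : Type*} [CommRing R]

/-- The congruence subgroup `Γ⁰(I)` of `SL(2, R)`: the matrices that are lower triangular
modulo `I`. -/
def upperGamma0 (I : Ideal R) : Subgroup SL(2, R) where
  carrier := {g | g 0 1 ∈ I}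
  one_mem' := by simp
  mul_mem' {g h} hg hh := by
    simpa [mul_apply, Fin.sum_univ_two] using
      I.add_mem (I.mul_mem_left (g 0 0) hh) (I.mul_mem_right (h 1 1) hg)
  inv_mem' {g} hg := by simpa [coe_inv, adjugate_fin_two] using hg

theorem mem_upperGamma0 {I : Ideal R} {g : SL(2, R)} : g ∈ upperGamma0 I ↔ g 0 1 ∈ I :=
  Iff.rfl

theorem mk_upperGamma0_eq_iff {I : Ideal R} {g h : SL(2, R)} :
    (g : SL(2, R) ⧸ upperGamma0 I) = h ↔
      Ideal.Quotient.mk I (g 1 1 * h 0 1) = Ideal.Quotient.mk I (g 0 1 * h 1 1) := by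
  rw [QuotientGroup.eq, mem_upperGamma0, Ideal.Quotient.eq]
  simp [mul_apply, Fin.sum_univ_two, coe_inv, adjugate_fin_two, sub_eq_add_neg]

/-- The representative of the coset of `Γ⁰(I)` attached to a point of the projective line over the
local ring `R ⧸ I`: the point is that of the second column, read as `[x : 1]` for `inl x` and as
`[1 : y]`, with `y` not invertible, for `inr y`. -/
noncomputable def projectiveLineRep (I : Ideal R) [IsLocalRing (R ⧸ I)] :
    (R ⧸ I) ⊕ maximalIdeal (R ⧸ I) → SL(2, R)
  | .inl x => ⟨!![1, x.out; 0, 1], by simp⟩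
  | .inr y => ⟨!![0, 1; -1, y.1.out], by simp⟩

theorem mk_projectiveLineRep_inl_eq_iff {I : Ideal R} [IsLocalRing (R ⧸ I)] {x : R ⧸ I}
    {g : SL(2, R)} :
    (projectiveLineRep I (.inl x) : SL(2, R) ⧸ upperGamma0 I) = g ↔
      Ideal.Quotient.mk I (g 0 1) = x * Ideal.Quotient.mk I (g 1 1) := by
  rw [mk_upperGamma0_eq_iff]
  simp [projectiveLineRep]

theorem mk_projectiveLineRep_inr_eq_iff {I : Ideal R} [IsLocalRing (R ⧸ I)]
    {y : maximalIdeal (R ⧸ I)} {g : SL(2, R)} :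
    (projectiveLineRep I (.inr y) : SL(2, R) ⧸ upperGamma0 I) = g ↔
      Ideal.Quotient.mk I (g 1 1) = y * Ideal.Quotient.mk I (g 0 1) := by
  rw [mk_upperGamma0_eq_iff, eq_comm]
  simp [projectiveLineRep]

theorem mk_projectiveLineRep_injective (I : Ideal R) [IsLocalRing (R ⧸ I)] :
    Function.Injective fun s ↦ (projectiveLineRep I s : SL(2, R) ⧸ upperGamma0 I) := by
  have mul_ne_one (x : R ⧸ I) (y : maximalIdeal (R ⧸ I)) : x * y ≠ 1 := fun h ↦
    (mem_maximalIdeal _).1 y.2 (.of_mul_eq_one_right x h)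
  have inl_ne_inr (x : R ⧸ I) (y : maximalIdeal (R ⧸ I)) :
      (projectiveLineRep I (.inl x) : SL(2, R) ⧸ upperGamma0 I) ≠
        projectiveLineRep I (.inr y) := fun h ↦
    mul_ne_one x y <| by
      simpa [projectiveLineRep, eq_comm] using mk_projectiveLineRep_inl_eq_iff.1 h
  rintro (x | y) (x' | y') h
  · congr 1
    simpa [projectiveLineRep, eq_comm] using mk_projectiveLineRep_inl_eq_iff.1 h
  · exact absurd h (inl_ne_inr x y')
  · exact absurd h.symm (inl_ne_inr x' y)
  · congr 1
    ext1
    simpa [projectiveLineRep, eq_comm] using mk_projectiveLineRep_inr_eq_iff.1 h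

theorem mk_projectiveLineRep_surjective (I : Ideal R) [IsLocalRing (R ⧸ I)] :
    Function.Surjective fun s ↦ (projectiveLineRep I s : SL(2, R) ⧸ upperGamma0 I) := by
  intro c
  obtain ⟨g, rfl⟩ := QuotientGroup.mk_surjective c
  by_cases hd : IsUnit (Ideal.Quotient.mk I (g 1 1))
  · obtain ⟨x, hx⟩ := hd.dvd (a := Ideal.Quotient.mk I (g 0 1))
    exact ⟨.inl x, mk_projectiveLineRep_inl_eq_iff.2 (hx.trans (mul_comm _ _))⟩
  · have hb : IsUnit (Ideal.Quotient.mk I (g 0 1)) := by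
      obtain ⟨u, v, huv⟩ := (isCoprime_col g 1).map (Ideal.Quotient.mk I)
      exact isUnit_of_mul_isUnit_right ((isUnit_or_isUnit_of_add_one huv).resolve_right
        fun hv ↦ hd (isUnit_of_mul_isUnit_right hv))
    obtain ⟨y, hy⟩ := hb.dvd (a := Ideal.Quotient.mk I (g 1 1))
    have hy_mem : y ∈ maximalIdeal (R ⧸ I) := fun hu ↦ hd (hy ▸ hb.mul hu)
    exact ⟨.inr ⟨y, hy_mem⟩, mk_projectiveLineRep_inr_eq_iff.2 (hy.trans (mul_comm _ _))⟩

/-- For a local quotient `R ⧸ I`, the cosets of `Γ⁰(I)` in `SL(2, R)` are the points of the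
projective line over `R ⧸ I`. -/
noncomputable def projectiveLineEquivQuotient (I : Ideal R) [IsLocalRing (R ⧸ I)] :
    (R ⧸ I) ⊕ maximalIdeal (R ⧸ I) ≃ SL(2, R) ⧸ upperGamma0 I :=
  .ofBijective _ ⟨mk_projectiveLineRep_injective I, mk_projectiveLineRep_surjective I⟩

/-- The image of `SL(2, R)` in `SL(2, F)`, for an `R`-algebra `F`. -/
abbrev integralSL2 (R F : Type*) [CommRing R] [CommRing F] [Algebra R F] : Subgroup SL(2, F) :=
  (map (n := Fin 2) (algebraMap R F)).range

variable (F : Type*) [Field F] [Algebra R F] [FaithfulSMul R F]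

/-- The diagonal matrix `diag(r, r⁻¹)` in `SL(2, F)` of a nonzero element `r` of a subring `R` of
the field `F`. -/
noncomputable abbrev integralDiag2 (r : R) (hr : r ≠ 0) : SL(2, F) :=
  diag2 (algebraMap R F r) ((map_ne_zero_iff _ (FaithfulSMul.algebraMap_injective R F)).2 hr)

theorem integralDiag2_mul_map_eq_iff {r : R} (hr : r ≠ 0) {g h : SL(2, R)} :
    integralDiag2 F r hr * map (algebraMap R F) h =
        map (algebraMap R F) g * integralDiag2 F r hr ↔
      h 0 0 = g 0 0 ∧ r ^ 2 * h 0 1 = g 0 1 ∧ h 1 0 = r ^ 2 * g 1 0 ∧ h 1 1 = g 1 1 := by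
  have inj := FaithfulSMul.algebraMap_injective R F
  have hrF : algebraMap R F r ≠ 0 := (map_ne_zero_iff _ inj).2 hr
  simp only [Matrix.SpecialLinearGroup.ext_iff, coe_mul, diag2n_coe, map_apply_coe,
    RingHom.mapMatrix_apply, mul_apply, map_apply, Fin.sum_univ_two, Fin.forall_fin_two,
    diagonal_apply_eq, ↓reduceIte, ne_eq, one_ne_zero, not_false_eq_true, diagonal_apply_ne,
    mul_zero, add_zero, zero_ne_one, zero_add, zero_mul]
  field_simp
  simp [← map_pow, ← map_mul, inj.eq_iff, and_assoc]

theorem comap_conj_integralDiag2 {r : R} (hr : r ≠ 0) :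
    (MulAut.conj (integralDiag2 F r hr) • integralSL2 R F).comap (map (algebraMap R F)) =
      upperGamma0 (Ideal.span {r ^ 2}) := by
  ext g
  have mem_conj_iff : map (algebraMap R F) g ∈ MulAut.conj (integralDiag2 F r hr) •
      integralSL2 R F ↔ ∃ h : SL(2, R), integralDiag2 F r hr * map (algebraMap R F) h =
        map (algebraMap R F) g * integralDiag2 F r hr := by
    rw [Subgroup.mem_pointwise_smul_iff_inv_smul_mem]
    simp only [integralSL2, MonoidHom.mem_range, MulAut.smul_def, MulAut.conj_inv_apply, mul_assoc,
      eq_inv_mul_iff_mul_eq]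
  simp only [Subgroup.mem_comap, mem_conj_iff, integralDiag2_mul_map_eq_iff, mem_upperGamma0,
    Ideal.mem_span_singleton]
  constructor
  · rintro ⟨h, -, h01, -, -⟩
    exact ⟨h 0 1, h01.symm⟩
  · rintro ⟨c, hc⟩
    refine ⟨⟨!![g 0 0, c; r ^ 2 * g 1 0, g 1 1], ?_⟩, rfl, hc.symm, rfl, rfl⟩
    have hdet := g.det_coe
    rw [det_fin_two] at hdet
    rw [det_fin_two_of]
    linear_combination hdet + g 1 0 * hc

end CongruenceSubgroup

section PrimePower

open IsLocalRing

variable {R : Type*} [CommRing R] (P : Ideal R) [P.IsMaximal] {n : ℕ}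

theorem isLocalRing_quotient_pow (hn : n ≠ 0) : IsLocalRing (R ⧸ P ^ n) := by
  let _ := Ideal.Quotient.field P
  have : IsLocalHom (Ideal.Quotient.factor (Ideal.pow_le_self (I := P) hn)) := by
    refine ⟨fun x hx ↦ ?_⟩
    obtain ⟨x, rfl⟩ := Ideal.Quotient.mk_surjective x
    exact (Ideal.Quotient.isUnit_mk_pow_iff_isUnit_mk P hn).2 hx
  exact (Ideal.Quotient.factor (Ideal.pow_le_self (I := P) hn)).domain_isLocalRing

theorem maximalIdeal_quotient_pow (hn : n ≠ 0) [IsLocalRing (R ⧸ P ^ n)] :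
    maximalIdeal (R ⧸ P ^ n) = P.map (Ideal.Quotient.mk (P ^ n)) := by
  ext x
  obtain ⟨x, rfl⟩ := Ideal.Quotient.mk_surjective x
  rw [Ideal.mem_quotient_iff_mem (Ideal.pow_le_self hn), mem_maximalIdeal, mem_nonunits_iff,
    Ideal.Quotient.isUnit_mk_pow_iff_notMem P hn, not_not]

theorem card_quotient_pow_eq_mul (hn : n ≠ 0) [IsLocalRing (R ⧸ P ^ n)] :
    Nat.card (R ⧸ P ^ n) = Nat.card (R ⧸ P) * Nat.card (maximalIdeal (R ⧸ P ^ n)) := by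
  rw [Submodule.card_eq_card_quotient_mul_card (maximalIdeal (R ⧸ P ^ n)),
    maximalIdeal_quotient_pow P hn, mul_comm,
    Nat.card_congr (DoubleQuot.quotQuotEquivQuotOfLE (Ideal.pow_le_self hn)).toEquiv]

theorem card_projectiveLine_quotient_pow [IsDedekindDomain R] [Finite (R ⧸ P)] (hP : P ≠ ⊥)
    (hn : n ≠ 0) [IsLocalRing (R ⧸ P ^ n)] :
    Nat.card ((R ⧸ P ^ n) ⊕ maximalIdeal (R ⧸ P ^ n)) =
      (Nat.card (R ⧸ P) + 1) * Nat.card (R ⧸ P) ^ (n - 1) := by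
  have := Ideal.finite_quotient_pow (IsNoetherian.noetherian P) n
  have hA : Nat.card (R ⧸ P ^ n) = Nat.card (R ⧸ P) * Nat.card (R ⧸ P) ^ (n - 1) := by
    rw [mul_pow_sub_one hn]
    exact cardQuot_pow_of_prime hP
  have hm : Nat.card (maximalIdeal (R ⧸ P ^ n)) = Nat.card (R ⧸ P) ^ (n - 1) :=
    Nat.eq_of_mul_eq_mul_left Nat.card_pos ((card_quotient_pow_eq_mul P hn).symm.trans hA)
  rw [Nat.card_sum, hA, hm, add_one_mul]

end PrimePower

theorem stmt6_general {R : Type*} (F : Type*) [CommRing R] [IsDedekindDomain R] [Field F]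
    [Algebra R F] [FaithfulSMul R F] {ϖ : R} (hϖ : Prime ϖ) [Finite (R ⧸ Ideal.span {ϖ})] {n : ℕ}
    (hn : 1 ≤ n) :
    (leftCosetsIn (integralSL2 R F) (integralDiag2 F (ϖ ^ n) (pow_ne_zero n hϖ.ne_zero))).Finite ∧
      Nat.card (leftCosetsIn (integralSL2 R F)
          (integralDiag2 F (ϖ ^ n) (pow_ne_zero n hϖ.ne_zero))) =
        (Nat.card (R ⧸ Ideal.span {ϖ}) + 1) * Nat.card (R ⧸ Ideal.span {ϖ}) ^ (2 * n - 1) := by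
  set P := Ideal.span {ϖ}
  have hP : P ≠ ⊥ := by simpa [P] using hϖ.ne_zero
  have : P.IsPrime := (Ideal.span_singleton_prime hϖ.ne_zero).2 hϖ
  have : P.IsMaximal := this.isMaximal hP
  have h2n : 2 * n ≠ 0 := by lia
  have := isLocalRing_quotient_pow P h2n
  have := Ideal.finite_quotient_pow (IsNoetherian.noetherian P) (2 * n)
  have hΓ := comap_conj_integralDiag2 F (pow_ne_zero n hϖ.ne_zero)
  rw [← pow_mul', ← Ideal.span_singleton_pow] at hΓ
  let e := (projectiveLineEquivQuotient (P ^ (2 * n))).trans <|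
    (Subgroup.quotientEquivOfEq hΓ.symm).trans <|
      quotientComapConjEquivLeftCosetsIn _ (integralDiag2 F (ϖ ^ n) _)
  exact ⟨.of_equiv _ e, (Nat.card_congr e).symm.trans (card_projectiveLine_quotient_pow P hP h2n)⟩

section Padic

open Matrix.SpecialLinearGroup
open scoped MatrixGroups Pointwise

variable (p : ℕ) [Fact p.Prime]

theorem card_padicInt_quotient_span_p : Nat.card (ℤ_[p] ⧸ Ideal.span {(p : ℤ_[p])}) = p := by
  rw [← PadicInt.maximalIdeal_eq_span_p]
  exact (Nat.card_congr PadicInt.residueField.toEquiv).trans (Nat.card_zmod p)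

instance finite_padicInt_quotient_span_p : Finite (ℤ_[p] ⧸ Ideal.span {(p : ℤ_[p])}) :=
  Nat.finite_of_card_ne_zero <| by
    rw [card_padicInt_quotient_span_p]
    exact NeZero.ne p

theorem Kset_eq_integralSL2 : Kset p = (integralSL2 ℤ_[p] ℚ_[p] : Set SL(2, ℚ_[p])) := by
  ext g
  constructor
  · intro hg
    let m : Matrix (Fin 2) (Fin 2) ℤ_[p] := fun i j ↦ ⟨g i j, hg i j⟩
    have hdet : m.det = 1 := by
      apply FaithfulSMul.algebraMap_injective ℤ_[p] ℚ_[p]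
      rw [RingHom.map_det, map_one]
      exact g.det_coe
    exact ⟨⟨m, hdet⟩, rfl⟩
  · rintro ⟨h, rfl⟩ i j
    exact (h i j).norm_le_one

theorem aSL_eq_integralDiag2 (lam : ℕ) (hp : (p : ℤ_[p]) ^ lam ≠ 0) :
    aSL p lam = integralDiag2 ℚ_[p] ((p : ℤ_[p]) ^ lam) hp := by
  apply Subtype.ext
  rw [diag2_coe', aSL]
  simp

theorem cosetsIn_eq_leftCosetsIn (lam : ℤ) :
    cosetsIn p lam = leftCosetsIn (integralSL2 ℤ_[p] ℚ_[p]) (aSL p lam) := by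
  have coset_eq (g : SL(2, ℚ_[p])) :
      {h | ∃ k ∈ Kset p, h = g * k} = g • (integralSL2 ℤ_[p] ℚ_[p] : Set SL(2, ℚ_[p])) := by
    ext h
    simp [Set.mem_smul_set, Kset_eq_integralSL2, eq_comm]
  have doubleCoset_eq : {h | ∃ k₁ ∈ Kset p, ∃ k₂ ∈ Kset p, h = k₁ * aSL p lam * k₂} =
      DoubleCoset.doubleCoset (aSL p lam) (integralSL2 ℤ_[p] ℚ_[p]) (integralSL2 ℤ_[p] ℚ_[p]) := by
    ext h
    rw [DoubleCoset.mem_doubleCoset, Kset_eq_integralSL2]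
    rfl
  simp only [cosetsIn, leftCosetsIn, coset_eq, doubleCoset_eq]

end Padic

/-- For every integer `λ ≥ 1`, the set of left cosets `gK` of `K = SL(2,ℤ_p)` in
`G = SL(2,ℚ_p)` contained in the double coset `K·a_λ·K` is finite, of cardinality
`(p + 1)·p^(2λ−1)`. -/
theorem stmt6 (p : ℕ) [Fact p.Prime] (lam : ℕ) (hlam : 1 ≤ lam) :
    (cosetsIn p (lam : ℤ)).Finite ∧
      Nat.card (cosetsIn p (lam : ℤ)) = (p + 1) * p ^ (2 * lam - 1) := by
  rw [cosetsIn_eq_leftCosetsIn,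
    aSL_eq_integralDiag2 p lam (pow_ne_zero lam PadicInt.prime_p.ne_zero)]
  simpa only [card_padicInt_quotient_span_p] using
    stmt6_general ℚ_[p] (PadicInt.prime_p (p := p)) hlam
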